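/- Let b₄⁻ ∈ [0, 1/2) be the root of the fourth Bernoulli polynomial B₄ in that interval, and suppose 0 < a ≤ b₄⁻. Then ζ(σ, a) > 0 for every real σ with −4 < σ < −3. -/

import Mathlib

open HurwitzZeta Polynomial Set

/-- The `n`-th Bernoulli polynomial evaluated at a real number. -/
noncomputable def bernoulliPoly (n : ℕ) (x : ℝ) : ℝ := Polynomial.aeval x (Polynomial.bernoulli n)

/-
Write `C(s) = ∑ cos(2πna) / n^s` and `S(s) = ∑ sin(2πna) / n^s`. By the functional equation,
`ζ(1 - s, a)` is a positive multiple of `cos(πs/2) C(s) + sin(πs/2) S(s)`, and both trigonometric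
factors are nonnegative for `s ∈ (4k, 4k + 1]`. The inequality `|sin(nx)| ≤ n |sin x|` shows that
the first term of `S(s)` dominates, so `S(s) > 0`. The sign of `C(4)` is opposite to that of
`B₄(a)`, and `C(4) ≥ 0` forces `C(s) ≥ 0` for all `s ≥ 4`: either `cos(2πa) > 1/8` dominates the
series, or `|cos(2πa)| ≤ 1/8`, and then `cos(4πa)` is close to `-1`, so that replacing `4` by `s`
increases the second term of the series by more than the later terms can decrease.
-/

open Real

lemma norm_sub_sum_range_le_of_hasSum {E : Type*} [NormedAddCommGroup E] {f : ℕ → E} {g : ℕ → ℝ}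
    {A : E} {B : ℝ} (N : ℕ) (hf : HasSum f A) (hg : HasSum g B) (hfg : ∀ n, N ≤ n → ‖f n‖ ≤ g n) :
    ‖A - ∑ n ∈ Finset.range N, f n‖ ≤ B - ∑ n ∈ Finset.range N, g n := by
  rw [← ((hasSum_nat_add_iff' N).mpr hf).tsum_eq]
  exact tsum_of_norm_bounded ((hasSum_nat_add_iff' N).mpr hg) fun n ↦ hfg _ (Nat.le_add_left N n)

lemma hasSum_ofReal_div_natCast_cpow_iff {u : ℕ → ℝ} {s : ℝ} {z : ℂ} :
    HasSum (fun n : ℕ ↦ (u n : ℂ) / (n : ℂ) ^ (s : ℂ)) z ↔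
      HasSum (fun n : ℕ ↦ u n / (n : ℝ) ^ s) z.re ∧ z.im = 0 := by
  have hterm (n : ℕ) : (u n : ℂ) / (n : ℂ) ^ (s : ℂ) = ((u n / (n : ℝ) ^ s : ℝ) : ℂ) := by
    rw [Complex.ofReal_div, Complex.ofReal_cpow n.cast_nonneg, Complex.ofReal_natCast]
  simp only [hterm, Complex.hasSum_iff, Complex.ofReal_re, Complex.ofReal_im]
  exact and_congr_right fun _ ↦ ⟨(·.unique hasSum_zero), fun h ↦ by simp [h]⟩

section RealExponent

variable (a : ℝ) {s : ℝ}

lemma hasSum_nat_cosZeta_re (hs : 1 < s) :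
    HasSum (fun n : ℕ ↦ cos (2 * π * a * n) / (n : ℝ) ^ s) (cosZeta a s).re :=
  (hasSum_ofReal_div_natCast_cpow_iff.mp <| mod_cast hasSum_nat_cosZeta a (s := s) (by simpa)).1

lemma ofReal_cosZeta_re (hs : 1 < s) : ((cosZeta a s).re : ℂ) = cosZeta a s :=
  have hsum : HasSum (fun n : ℕ ↦ (cos (2 * π * a * n) : ℂ) / (n : ℂ) ^ (s : ℂ)) (cosZeta a s) :=
    hasSum_nat_cosZeta a (by simpa)
  Complex.ext rfl (hasSum_ofReal_div_natCast_cpow_iff.mp (mod_cast hsum)).2.symm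

lemma hasSum_nat_sinZeta_re (hs : 1 < s) :
    HasSum (fun n : ℕ ↦ sin (2 * π * a * n) / (n : ℝ) ^ s) (sinZeta a s).re :=
  (hasSum_ofReal_div_natCast_cpow_iff.mp <| mod_cast hasSum_nat_sinZeta a (s := s) (by simpa)).1

lemma ofReal_sinZeta_re (hs : 1 < s) : ((sinZeta a s).re : ℂ) = sinZeta a s :=
  have hsum : HasSum (fun n : ℕ ↦ (sin (2 * π * a * n) : ℂ) / (n : ℂ) ^ (s : ℂ)) (sinZeta a s) :=
    hasSum_nat_sinZeta a (by simpa)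
  Complex.ext rfl (hasSum_ofReal_div_natCast_cpow_iff.mp (mod_cast hsum)).2.symm

lemma hurwitzZeta_one_sub_ofReal (hs : 1 < s) :
    hurwitzZeta a ((1 - s : ℝ) : ℂ) = ((2 * (2 * π) ^ (-s) * Gamma s *
      (cos (π * s / 2) * (cosZeta a s).re + sin (π * s / 2) * (sinZeta a s).re) : ℝ) : ℂ) := by
  have hs_ne_neg (n : ℕ) : (s : ℂ) ≠ -n := by
    exact_mod_cast (by linarith [n.cast_nonneg (α := ℝ)] : -(n : ℝ) < s).ne'
  have hs_ne_one : (s : ℂ) ≠ 1 := by exact_mod_cast hs.ne'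
  rw [Complex.ofReal_sub, Complex.ofReal_one, hurwitzZeta,
    hurwitzZetaEven_one_sub _ hs_ne_neg (.inr hs_ne_one), hurwitzZetaOdd_one_sub _ hs_ne_neg,
    Complex.Gamma_ofReal]
  push_cast [Complex.ofReal_cpow two_pi_pos.le, ofReal_cosZeta_re a hs, ofReal_sinZeta_re a hs]
  ring

end RealExponent

lemma abs_sin_mul_natCast_le (x : ℝ) (n : ℕ) : |sin (x * n)| ≤ n * |sin x| := by
  induction n with
  | zero => simp
  | succ n ih =>
    calc |sin (x * (n + 1 : ℕ))| = |sin (x * n) * cos x + cos (x * n) * sin x| := by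
          rw [← sin_add]; push_cast; ring_nf
      _ ≤ |sin (x * n)| * |cos x| + |cos (x * n)| * |sin x| := by
          simpa only [abs_mul] using abs_add_le (sin (x * n) * cos x) (cos (x * n) * sin x)
      _ ≤ |sin (x * n)| * 1 + 1 * |sin x| := by gcongr <;> exact abs_cos_le_one _
      _ ≤ (n + 1 : ℕ) * |sin x| := by push_cast; linarith

lemma one_div_rpow_le_one_div_pow {y s : ℝ} {k : ℕ} (hy : 1 ≤ y) (hs : k ≤ s) :
    1 / y ^ s ≤ 1 / y ^ k := by
  rw [← rpow_natCast]
  gcongr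

lemma sinZeta_re_pos {a s : ℝ} (ha : 0 < a) (ha' : a < 1 / 2) (hs : 3 ≤ s) :
    0 < (sinZeta a s).re := by
  have hsin : 0 < sin (2 * π * a) :=
    sin_pos_of_pos_of_lt_pi (by positivity) (by nlinarith [pi_pos])
  have hbound (n : ℕ) (hn : 2 ≤ n) :
      ‖sin (2 * π * a * n) / (n : ℝ) ^ s‖ ≤ sin (2 * π * a) * (1 / (n : ℝ) ^ 2) := by
    have hn' : (1 : ℝ) ≤ n := by exact_mod_cast one_le_two.trans hn
    calc ‖sin (2 * π * a * n) / (n : ℝ) ^ s‖ = |sin (2 * π * a * n)| * (1 / (n : ℝ) ^ s) := by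
          rw [norm_div, norm_eq_abs, norm_of_nonneg (by positivity), div_eq_mul_one_div]
      _ ≤ (n * sin (2 * π * a)) * (1 / (n : ℝ) ^ 3) := by
          refine mul_le_mul ?_ (one_div_rpow_le_one_div_pow hn' (by exact_mod_cast hs))
            (by positivity) (by positivity)
          simpa only [abs_of_pos hsin] using abs_sin_mul_natCast_le (2 * π * a) n
      _ = sin (2 * π * a) * (1 / (n : ℝ) ^ 2) := by field_simp
  have htail : |(sinZeta a s).re - sin (2 * π * a)| ≤ sin (2 * π * a) * (π ^ 2 / 6 - 1) := by
    simpa [Finset.sum_range_succ, mul_sub] using norm_sub_sum_range_le_of_hasSum 2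
      (hasSum_nat_sinZeta_re a (by linarith)) (hasSum_zeta_two.mul_left _) hbound
  have hpi : π ^ 2 / 6 - 1 < 1 := by nlinarith [pi_pos, pi_lt_d2]
  linarith [neg_abs_le ((sinZeta a s).re - sin (2 * π * a)), mul_lt_of_lt_one_right hsin hpi]

lemma abs_cosZeta_re_sub_cos_le (a : ℝ) {s : ℝ} (hs : 4 ≤ s) :
    |(cosZeta a s).re - cos (2 * π * a)| ≤ 1 / 8 := by
  have hbound (n : ℕ) (hn : 2 ≤ n) :
      ‖cos (2 * π * a * n) / (n : ℝ) ^ s‖ ≤ 1 / (n : ℝ) ^ 4 := by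
    have hn' : (1 : ℝ) ≤ n := by exact_mod_cast one_le_two.trans hn
    calc ‖cos (2 * π * a * n) / (n : ℝ) ^ s‖ = |cos (2 * π * a * n)| / (n : ℝ) ^ s := by
          rw [norm_div, norm_eq_abs, norm_of_nonneg (by positivity)]
      _ ≤ 1 / (n : ℝ) ^ s := by gcongr; exact abs_cos_le_one _
      _ ≤ 1 / (n : ℝ) ^ 4 := one_div_rpow_le_one_div_pow hn' (by exact_mod_cast hs)
  have htail : |(cosZeta a s).re - cos (2 * π * a)| ≤ π ^ 4 / 90 - 1 := by
    simpa [Finset.sum_range_succ, zero_rpow (by linarith : s ≠ 0)] using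
      norm_sub_sum_range_le_of_hasSum 2 (hasSum_nat_cosZeta_re a (by linarith))
        hasSum_zeta_four hbound
  have hpi : π ^ 4 / 90 - 1 ≤ 1 / 8 := by
    have : π ^ 4 < 3.15 ^ 4 := by gcongr; exact pi_lt_d2
    linarith
  exact htail.trans hpi

lemma one_sub_rpow_neg_le_mul {b y w δ : ℝ} (hb : 0 < b) (hy : 0 < y) (hw : 1 ≤ w) (hδ : 0 ≤ δ)
    (hyb : y ≤ b ^ w) : 1 - y ^ (-δ) ≤ w * (1 - b ^ (-δ)) := by
  have hbernoulli : 1 + w * (b ^ (-δ) - 1) ≤ (1 + (b ^ (-δ) - 1)) ^ w :=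
    one_add_mul_self_le_rpow_one_add (by linarith [rpow_pos_of_pos hb (-δ)]) hw
  have hpow : (b ^ (-δ)) ^ w ≤ y ^ (-δ) := by
    rw [← rpow_mul hb.le, mul_comm, rpow_mul hb.le]
    exact rpow_le_rpow_of_nonpos hy hyb (neg_nonpos.mpr hδ)
  rw [add_sub_cancel] at hbernoulli
  linarith

-- The exponent is quadratic in `y` so that, divided by `y ^ 4`, it sums to multiples of the known
-- values `ζ(4)` and `ζ(2)`.
lemma le_two_rpow_four_thirds_add_sq_div {y : ℝ} (hy : 0 < y) : y ≤ 2 ^ (4 / 3 + y ^ 2 / 16) := by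
  rw [le_rpow_iff_log_le hy two_pos]
  -- the tangent to `log` at `16`, evaluated at `y ^ 2`
  have htangent : log (y ^ 2 / 2 ^ 4) ≤ y ^ 2 / 2 ^ 4 - 1 := log_le_sub_one_of_pos (by positivity)
  have hlog : log (y ^ 2 / 2 ^ 4) = 2 * log y - 4 * log 2 := by
    rw [log_div (by positivity) (by positivity), log_pow, log_pow]
    norm_cast
  nlinarith [log_two_gt_d9, log_two_lt_d9, sq_nonneg y]

lemma abs_one_div_rpow_sub_one_div_pow_four_le {y s : ℝ} (hy : 1 ≤ y) (hs : 4 ≤ s) :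
    |1 / y ^ s - 1 / y ^ 4| ≤
      (1 - 2 ^ (4 - s)) * (4 / 3 * (1 / y ^ 4) + 1 / 16 * (1 / y ^ 2)) := by
  have hy0 : 0 < y := zero_lt_one.trans_le hy
  have hfactor : 1 / y ^ 4 - 1 / y ^ s = (1 - y ^ (-(s - 4))) * (1 / y ^ 4) := by
    rw [neg_sub, rpow_sub hy0, rpow_ofNat]
    field_simp
  have hle : 1 / y ^ s ≤ 1 / y ^ 4 := one_div_rpow_le_one_div_pow hy (by exact_mod_cast hs)
  rw [abs_sub_comm, abs_of_nonneg (sub_nonneg.mpr hle), hfactor]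
  calc (1 - y ^ (-(s - 4))) * (1 / y ^ 4)
      ≤ ((4 / 3 + y ^ 2 / 16) * (1 - 2 ^ (-(s - 4)))) * (1 / y ^ 4) := by
        gcongr
        exact one_sub_rpow_neg_le_mul two_pos hy0 (by nlinarith) (by linarith)
          (le_two_rpow_four_thirds_add_sq_div hy0)
    _ = _ := by rw [neg_sub]; field_simp

lemma abs_cosZeta_re_sub_cosZeta_four_re_add_le (a : ℝ) {s : ℝ} (hs : 4 ≤ s) :
    |(cosZeta a s).re - (cosZeta a 4).re + (1 - 2 ^ (4 - s)) * (cos (4 * π * a) / 16)| ≤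
      (1 - 2 ^ (4 - s)) * (4 / 3 * (π ^ 4 / 90 - 17 / 16) + 1 / 16 * (π ^ 2 / 6 - 5 / 4)) := by
  have hbound (n : ℕ) (hn : 3 ≤ n) :
      ‖cos (2 * π * a * n) / (n : ℝ) ^ s - cos (2 * π * a * n) / (n : ℝ) ^ (4 : ℝ)‖ ≤
        (1 - 2 ^ (4 - s)) * (4 / 3 * (1 / (n : ℝ) ^ 4) + 1 / 16 * (1 / (n : ℝ) ^ 2)) := by
    have hn' : (1 : ℝ) ≤ n := by exact_mod_cast (by lia : 1 ≤ n)
    rw [rpow_ofNat, div_eq_mul_one_div, div_eq_mul_one_div (cos _) (_ ^ 4), ← mul_sub, norm_mul]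
    exact (mul_le_of_le_one_left (norm_nonneg _) (abs_cos_le_one _)).trans
      (abs_one_div_rpow_sub_one_div_pow_four_le hn' hs)
  have hsum_four : HasSum (fun n : ℕ ↦ cos (2 * π * a * n) / (n : ℝ) ^ (4 : ℝ)) (cosZeta a 4).re :=
    mod_cast hasSum_nat_cosZeta_re a (s := 4) (by norm_num)
  have htail := norm_sub_sum_range_le_of_hasSum 3
    ((hasSum_nat_cosZeta_re a (by linarith)).sub hsum_four)
    (((hasSum_zeta_four.mul_left (4 / 3)).add (hasSum_zeta_two.mul_left (1 / 16))).mul_left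
      (1 - 2 ^ (4 - s))) hbound
  have hsecond : cos (2 * π * a * 2) / 2 ^ s - cos (2 * π * a * 2) / 2 ^ 4 =
      -((1 - 2 ^ (4 - s)) * (cos (4 * π * a) / 16)) := by
    rw [show 2 * π * a * 2 = 4 * π * a by ring, rpow_sub two_pos, rpow_ofNat]
    field_simp
    ring
  convert htail using 1
  · simp [Finset.sum_range_succ, zero_rpow (by linarith : s ≠ 0), hsecond]
  · simp only [Finset.sum_range_succ, Finset.sum_range_zero]
    push_cast
    ring

lemma cosZeta_four_re_le_of_abs_cos_le {a s : ℝ} (ha : |cos (2 * π * a)| ≤ 1 / 8) (hs : 4 ≤ s) :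
    (cosZeta a 4).re ≤ (cosZeta a s).re := by
  have hcos : cos (4 * π * a) ≤ -31 / 32 := by
    rw [show 4 * π * a = 2 * (2 * π * a) by ring, cos_two_mul]
    nlinarith [abs_le.mp ha]
  have hpow : (2 : ℝ) ^ (4 - s) ≤ 1 := rpow_le_one_of_one_le_of_nonpos one_le_two (by linarith)
  have hpi_sq : π ^ 2 < 9.8697 := by nlinarith [pi_pos, pi_lt_d4]
  have hpi_four : π ^ 4 < 97.411 := by nlinarith [sq_nonneg π]
  have hgain : 0 ≤ (1 - 2 ^ (4 - s)) * (-(cos (4 * π * a) / 16) -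
      (4 / 3 * (π ^ 4 / 90 - 17 / 16) + 1 / 16 * (π ^ 2 / 6 - 5 / 4))) :=
    mul_nonneg (by linarith) (by linarith)
  linarith [neg_le_of_abs_le (abs_cosZeta_re_sub_cosZeta_four_re_add_le a hs)]

lemma cosZeta_re_nonneg_of_four {a s : ℝ} (ha : 0 ≤ (cosZeta a 4).re) (hs : 4 ≤ s) :
    0 ≤ (cosZeta a s).re := by
  have hcos_s := abs_le.mp (abs_cosZeta_re_sub_cos_le a hs)
  have hcos_four : |(cosZeta a 4).re - cos (2 * π * a)| ≤ 1 / 8 :=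
    mod_cast abs_cosZeta_re_sub_cos_le a (le_refl 4)
  rw [abs_le] at hcos_four
  rcases le_total (cos (2 * π * a)) (1 / 8) with hcos | hcos
  · exact ha.trans (cosZeta_four_re_le_of_abs_cos_le (abs_le.mpr ⟨by linarith, hcos⟩) hs)
  · linarith

lemma cosZeta_two_mul_nat_re {a : ℝ} (ha : a ∈ Icc 0 1) {k : ℕ} (hk : k ≠ 0) :
    (cosZeta a (2 * k)).re =
      (-1) ^ (k + 1) * (2 * π) ^ (2 * k) / 2 / (2 * k).factorial * bernoulliPoly (2 * k) a := by
  have heval : ((Polynomial.bernoulli (2 * k)).map (algebraMap ℚ ℂ)).eval (a : ℂ) =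
      (bernoulliPoly (2 * k) a : ℂ) := by
    rw [eval_map_algebraMap, bernoulliPoly]
    exact aeval_algebraMap_apply ℂ a _
  rw [cosZeta_two_mul_nat hk ha, heval]
  exact_mod_cast Complex.ofReal_re _

lemma cosZeta_four_re_nonneg {a : ℝ} (ha : a ∈ Icc 0 1) (hB : bernoulliPoly 4 a ≤ 0) :
    0 ≤ (cosZeta a 4).re := by
  have hre : (cosZeta a 4).re = (2 * π) ^ 4 / 2 / (4).factorial * -bernoulliPoly 4 a := by
    have h := cosZeta_two_mul_nat_re ha two_ne_zero
    rw [show (2 * (2 : ℕ) : ℂ) = 4 by norm_num] at h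
    rw [h]
    ring
  rw [hre]
  exact mul_nonneg (by positivity) (neg_nonneg.mpr hB)

lemma bernoulliPoly_four (x : ℝ) : bernoulliPoly 4 x = (x * (1 - x)) ^ 2 - 1 / 30 := by
  have h3 : _root_.bernoulli 3 = 0 := by
    rw [bernoulli_eq_bernoulli'_of_ne_one (by decide), bernoulli'_three]
  have h4 : _root_.bernoulli 4 = -1 / 30 := by
    rw [bernoulli_eq_bernoulli'_of_ne_one (by decide), bernoulli'_four]
  simp only [bernoulliPoly, Polynomial.bernoulli, Finset.sum_range_succ, Finset.sum_range_zero,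
    map_add, map_zero, aeval_monomial, _root_.bernoulli_zero, _root_.bernoulli_one, bernoulli_two,
    h3, h4, eq_ratCast]
  push_cast [Nat.choose]
  ring

lemma monotoneOn_bernoulliPoly_four : MonotoneOn (bernoulliPoly 4) (Icc 0 (1 / 2)) := by
  intro x hx y hy hxy
  have hle : x * (1 - x) ≤ y * (1 - y) := by nlinarith [hx.2, hy.2]
  have hnonneg : 0 ≤ x * (1 - x) := mul_nonneg hx.1 (by linarith [hx.2])
  simp only [bernoulliPoly_four]
  gcongr

theorem hurwitzZeta_pos_on_Ioo_neg_four_neg_three_general {a : ℝ} (ha : 0 < a) (ha' : a < 1 / 2)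
    (hB : bernoulliPoly 4 a ≤ 0) {k : ℕ} (hk : 1 ≤ k) {σ : ℝ}
    (hσ : σ ∈ Ico (-(4 * k) : ℝ) (1 - 4 * k)) :
    (hurwitzZeta a σ).im = 0 ∧ 0 < (hurwitzZeta a σ).re := by
  obtain ⟨t, rfl⟩ : ∃ t, σ = 1 - (4 * k + t) := ⟨1 - σ - 4 * k, by ring⟩
  have ht : t ∈ Ioc 0 1 := ⟨by linarith [hσ.2], by linarith [hσ.1]⟩
  have hs : 4 ≤ 4 * k + t := by linarith [ht.1, (Nat.one_le_cast (α := ℝ)).mpr hk]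
  have hangle : π * (4 * k + t) / 2 = π * t / 2 + k * (2 * π) := by ring
  have hC : 0 ≤ (cosZeta a (4 * k + t : ℝ)).re :=
    cosZeta_re_nonneg_of_four (cosZeta_four_re_nonneg ⟨ha.le, by linarith⟩ hB) hs
  have hS : 0 < (sinZeta a (4 * k + t : ℝ)).re := sinZeta_re_pos ha ha' (by linarith)
  have hcos : 0 ≤ cos (π * t / 2) :=
    cos_nonneg_of_neg_pi_div_two_le_of_le (by nlinarith [pi_pos, ht.1])
      (by nlinarith [pi_pos, ht.2])
  have hsin : 0 < sin (π * t / 2) :=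
    sin_pos_of_pos_of_lt_pi (by nlinarith [pi_pos, ht.1]) (by nlinarith [pi_pos, ht.2])
  have hGamma : 0 < Gamma (4 * k + t) := Gamma_pos_of_pos (by linarith)
  rw [hurwitzZeta_one_sub_ofReal a (by linarith), hangle, cos_add_nat_mul_two_pi,
    sin_add_nat_mul_two_pi]
  refine ⟨Complex.ofReal_im _, ?_⟩
  rw [Complex.ofReal_re]
  exact mul_pos (mul_pos (by positivity) hGamma) (by positivity)

/-- With `b₄⁻ ∈ [0,1/2)` the root of `B₄` in that interval and `0 < a ≤ b₄⁻`,
`ζ(σ, a) > 0` for every real `σ ∈ (-4, -3)`. -/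
theorem hurwitzZeta_pos_on_Ioo_neg_four_neg_three (bm : ℝ)
    (hbm : bm ∈ Set.Ico (0 : ℝ) (1 / 2)) (hbm0 : bernoulliPoly 4 bm = 0)
    (a : ℝ) (ha : 0 < a) (ha' : a ≤ bm) :
    ∀ σ : ℝ, -4 < σ → σ < -3 →
      (hurwitzZeta (a : UnitAddCircle) (σ : ℂ)).im = 0 ∧
        0 < (hurwitzZeta (a : UnitAddCircle) (σ : ℂ)).re := by
  have hlt : a < 1 / 2 := ha'.trans_lt hbm.2
  have hB : bernoulliPoly 4 a ≤ 0 :=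
    hbm0 ▸ monotoneOn_bernoulliPoly_four ⟨ha.le, hlt.le⟩ ⟨hbm.1, hbm.2.le⟩ ha'
  exact fun σ h4 h3 ↦ hurwitzZeta_pos_on_Ioo_neg_four_neg_three_general ha hlt hB le_rfl
    ⟨by push_cast; linarith, by push_cast; linarith⟩
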